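/- Let ψ, γ : ℝ → ℝ be continuous on a neighborhood of 0 with ψ(0) = 1, let ψ be differentiable at 0 with ψ′(0) = ψ₁, and set γ₀ := γ(0). Define, for A ≠ 0 close enough to 0, F(A) := ((1 − exp(−∫₀^A dt/ψ(t)))/A)·exp(∫₀^A γ(t)/ψ(t) dt), and F(0) := 1. Then F is differentiable at 0 with F′(0) = (2γ₀ − 1 − ψ₁)/2. -/

import Mathlib

/-!
Write `I A = ∫₀^A dt/ψ(t)` and `J A = ∫₀^A γ(t)/ψ(t) dt`. Then `(1 - exp (-I A)) / A` is the
divided difference at `0` of `u ↦ 1 - exp (-u)` composed with `I`, so it factors as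
`((1 - exp (-u)) / u) * (I A / A)` with `u = I A`. Both factors are divided differences of
primitives, of `exp (-t)` and of `1 / ψ`. The divided difference at `a` of a primitive of `g` has
value `g a` and derivative `g' a / 2` there, which gives `-1 / 2` and `-ψ₁ / 2`. The factor
`exp (J A)` contributes `γ 0`, and all three factors equal `1` at `0`.
-/

open Asymptotics Filter MeasureTheory Topology

section DividedDifference

variable {𝕜 E : Type*} [NontriviallyNormedField 𝕜] [NormedAddCommGroup E] [NormedSpace 𝕜 E]

theorem hasDerivAt_dslope_of_isLittleO {f : 𝕜 → E} {a : 𝕜} {b c : E}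
    (h : (fun x => f x - f a - (x - a) • b - (x - a) ^ 2 • c) =o[𝓝 a] fun x => (x - a) ^ 2) :
    HasDerivAt (dslope f a) c a := by
  have hsq : (fun x => (x - a) ^ 2) =o[𝓝 a] fun x => x - a := by
    simpa only [← norm_pow, isLittleO_norm_left] using isLittleO_pow_sub_sub a one_lt_two
  have hquad : (fun x => (x - a) ^ 2 • c) =O[𝓝 a] fun x => (x - a) ^ 2 :=
    isBigO_of_le' (c := ‖c‖) _ fun x => (norm_smul _ _).trans_le (mul_comm _ _).le
  have hf : HasDerivAt f b a := hasDerivAt_iff_isLittleO.2 <|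
    ((h.isBigO.add hquad).trans_isLittleO hsq).congr_left fun _ => sub_add_cancel _ _
  rw [hasDerivAt_iff_isLittleO, dslope_same, hf.deriv]
  have hquot : (fun x => (x - a)⁻¹ • (f x - f a - (x - a) • b - (x - a) ^ 2 • c)) =o[𝓝 a]
      fun x => (x - a)⁻¹ • (x - a) ^ 2 :=
    (isBigO_refl (fun x => (x - a)⁻¹) (𝓝 a)).smul_isLittleO h
  refine hquot.congr (fun x => ?_) (fun x => ?_)
  · obtain rfl | hx := eq_or_ne x a
    · simp only [dslope_same, hf.deriv, sub_self, inv_zero, zero_smul]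
    · have hxa : x - a ≠ 0 := sub_ne_zero.2 hx
      rw [dslope_of_ne f hx, slope_def_module, smul_sub, smul_sub, inv_smul_smul₀ hxa, sq, mul_smul,
        inv_smul_smul₀ hxa]
  · rw [smul_eq_mul, sq, ← mul_assoc, inv_mul_mul_self]

theorem dslope_comp_eq_smul {f : 𝕜 → E} {h : 𝕜 → 𝕜} {a : 𝕜} (hf : DifferentiableAt 𝕜 f (h a))
    (hh : DifferentiableAt 𝕜 h a) (x : 𝕜) :
    dslope (f ∘ h) a x = dslope h a x • dslope f (h a) (h x) := by
  obtain rfl | hx := eq_or_ne x a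
  · simp only [dslope_same, deriv.scomp x hf hh]
  · rw [dslope_of_ne _ hx, dslope_of_ne _ hx, slope_def_module, slope_def_module, smul_assoc,
      sub_smul_dslope, Function.comp_apply, Function.comp_apply]

theorem hasDerivAt_dslope_comp {f : 𝕜 → E} {h : 𝕜 → 𝕜} {a d : 𝕜} {c : E}
    (hf : HasDerivAt (dslope f (h a)) c (h a)) (hh : HasDerivAt (dslope h a) d a) :
    HasDerivAt (dslope (f ∘ h) a) (deriv h a ^ 2 • c + d • deriv f (h a)) a := by
  have hf' : DifferentiableAt 𝕜 f (h a) := continuousAt_dslope_same.1 hf.continuousAt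
  have hh' : DifferentiableAt 𝕜 h a := continuousAt_dslope_same.1 hh.continuousAt
  have hprod := hh.fun_smul (hf.scomp a hh'.hasDerivAt)
  rw [funext (dslope_comp_eq_smul hf' hh')]
  refine hprod.congr_deriv ?_
  simp only [Function.comp_apply, dslope_same, smul_smul, sq]

end DividedDifference

section Primitive

variable {E : Type*} [NormedAddCommGroup E] [NormedSpace ℝ E]

theorem isLittleO_integral_pow_succ {r : ℝ → E} {a : ℝ} {n : ℕ}
    (hr : r =o[𝓝 a] fun t => (t - a) ^ n) :
    (fun x => ∫ t in a..x, r t) =o[𝓝 a] fun x => (x - a) ^ (n + 1) := by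
  refine isLittleO_iff.2 fun ε hε => ?_
  obtain ⟨δ, hδ, hball⟩ := Metric.eventually_nhds_iff_ball.1 (isLittleO_iff.1 hr hε)
  filter_upwards [Metric.ball_mem_nhds a hδ] with x hx
  have hbound : ∀ t ∈ Set.uIoc a x, ‖r t‖ ≤ ε * |x - a| ^ n := fun t ht => by
    have hta : |t - a| ≤ |x - a| := Set.abs_sub_left_of_mem_uIcc (Set.uIoc_subset_uIcc ht)
    have ht' : t ∈ Metric.ball a δ := hta.trans_lt hx
    calc ‖r t‖ ≤ ε * |t - a| ^ n := by simpa using hball t ht'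
      _ ≤ ε * |x - a| ^ n := by gcongr
  calc ‖∫ t in a..x, r t‖ ≤ ε * |x - a| ^ n * |x - a| :=
        intervalIntegral.norm_integral_le_of_norm_le_const hbound
    _ = ε * ‖(x - a) ^ (n + 1)‖ := by rw [norm_pow, Real.norm_eq_abs, pow_succ, mul_assoc]

variable [CompleteSpace E]

theorem hasDerivAt_integral_self {g : ℝ → E} {a : ℝ} (hgm : StronglyMeasurableAtFilter g (𝓝 a))
    (hg : ContinuousAt g a) : HasDerivAt (fun x => ∫ t in a..x, g t) (g a) a :=
  intervalIntegral.integral_hasDerivAt_right .refl hgm hg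

theorem hasDerivAt_dslope_integral {g : ℝ → E} {a : ℝ} {c : E}
    (hgm : StronglyMeasurableAtFilter g (𝓝 a)) (hg : HasDerivAt g c a) :
    HasDerivAt (dslope (fun x => ∫ t in a..x, g t) a) ((1 / 2 : ℝ) • c) a := by
  have hrem : (fun t => g t - g a - (t - a) • c) =o[𝓝 a] fun t => (t - a) ^ 1 := by
    simpa only [pow_one] using hg.isLittleO
  refine hasDerivAt_dslope_of_isLittleO (b := g a)
    ((isLittleO_integral_pow_succ hrem).congr' ?_ .rfl)
  have hint : ∀ᶠ x in 𝓝 a, IntervalIntegrable g volume a x :=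
    hg.continuousAt.tendsto.eventually_intervalIntegrable hgm
      (volume.finiteAt_nhds a) tendsto_const_nhds tendsto_id
  filter_upwards [hint] with x hx
  have hlin : ∫ t in a..x, (t - a) = (x - a) ^ 2 / 2 := by
    rw [intervalIntegral.integral_comp_sub_right (fun t => t), integral_id]
    ring
  have hcont : Continuous fun t : ℝ => (t - a) • c := by fun_prop
  rw [intervalIntegral.integral_sub (hx.sub intervalIntegrable_const)
      (hcont.intervalIntegrable a x), intervalIntegral.integral_sub hx intervalIntegrable_const,
    intervalIntegral.integral_const, intervalIntegral.integral_smul_const, hlin,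
    intervalIntegral.integral_same, sub_zero, smul_smul, mul_one_div]

end Primitive

section Measurability

variable {α β : Type*} [MeasurableSpace α] [TopologicalSpace β]

theorem stronglyMeasurableAtFilter_div₀ [GroupWithZero β] [ContinuousMul β] [ContinuousInv₀ β]
    [TopologicalSpace.MetrizableSpace β] {μ : Measure α} {l : Filter α} {f g : α → β}
    (hf : StronglyMeasurableAtFilter f l μ) (hg : StronglyMeasurableAtFilter g l μ) :
    StronglyMeasurableAtFilter (fun x => f x / g x) l μ := by
  obtain ⟨s, hs, hfs, hgs⟩ := (hf.eventually.and hg.eventually).exists_mem_of_smallSets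
  exact ⟨s, hs, hfs.div₀ hgs⟩

theorem stronglyMeasurableAtFilter_of_continuousOn_mem_nhds [TopologicalSpace α]
    [OpensMeasurableSpace α] [TopologicalSpace.PseudoMetrizableSpace β]
    [SecondCountableTopologyEither α β] {μ : Measure α} {f : α → β} {s : Set α} {a : α}
    (hf : ContinuousOn f s) (hs : s ∈ 𝓝 a) : StronglyMeasurableAtFilter f (𝓝 a) μ :=
  (hf.mono interior_subset).stronglyMeasurableAtFilter isOpen_interior a
    (mem_interior_iff_mem_nhds.2 hs)

end Measurability

theorem hasDerivAt_dslope_one_sub_exp_neg :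
    HasDerivAt (dslope (fun u : ℝ => 1 - Real.exp (-u)) 0) (-1 / 2) 0 := by
  have hexp : HasDerivAt (fun t : ℝ => Real.exp (-t)) (-1) 0 := by
    simpa using (hasDerivAt_neg (0 : ℝ)).exp
  have hprim : (fun u : ℝ => ∫ t in (0 : ℝ)..u, Real.exp (-t)) = fun u => 1 - Real.exp (-u) := by
    funext u
    simp
  have hmeas : StronglyMeasurableAtFilter (fun t : ℝ => Real.exp (-t)) (𝓝 0) :=
    Continuous.stronglyMeasurableAtFilter (by fun_prop) _ _
  rw [← hprim]
  exact (hasDerivAt_dslope_integral hmeas hexp).congr_deriv (by norm_num)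

theorem hasDerivAt_dslope_one_sub_exp_neg_comp {h : ℝ → ℝ} {a d : ℝ} (ha : h a = 0)
    (hh : HasDerivAt (dslope h a) d a) :
    HasDerivAt (dslope (fun x => 1 - Real.exp (-h x)) a) (d - deriv h a ^ 2 / 2) a := by
  have hderiv : deriv (fun u : ℝ => 1 - Real.exp (-u)) 0 = 1 := by
    simpa using ((hasDerivAt_neg (0 : ℝ)).exp.const_sub 1).deriv
  have hcomp := hasDerivAt_dslope_comp (ha.symm ▸ hasDerivAt_dslope_one_sub_exp_neg) hh
  refine hcomp.congr_deriv ?_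
  rw [ha, hderiv, smul_eq_mul, smul_eq_mul]
  ring

theorem noncovariant_dispersion_first_order_general {ψ γ : ℝ → ℝ} {ψ₁ : ℝ}
    (hψm : StronglyMeasurableAtFilter ψ (𝓝 0)) (hγm : StronglyMeasurableAtFilter γ (𝓝 0))
    (hψ0 : ψ 0 = 1) (hψ : HasDerivAt ψ ψ₁ 0) (hγ : ContinuousAt γ 0) :
    HasDerivAt (fun A : ℝ =>
        if A = 0 then 1 else
          ((1 - Real.exp (-(∫ t in (0 : ℝ)..A, 1 / ψ t))) / A)
            * Real.exp (∫ t in (0 : ℝ)..A, γ t / ψ t))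
      ((2 * γ 0 - 1 - ψ₁) / 2) 0 := by
  set I : ℝ → ℝ := fun A => ∫ t in (0 : ℝ)..A, 1 / ψ t
  have hψne : ψ 0 ≠ 0 := hψ0.symm ▸ one_ne_zero
  have hinv : HasDerivAt (fun t => 1 / ψ t) (-ψ₁) 0 := by
    simpa [hψ0] using hψ.fun_inv hψne
  have hinvm : StronglyMeasurableAtFilter (fun t => 1 / ψ t) (𝓝 0) :=
    stronglyMeasurableAtFilter_div₀ stronglyMeasurable_const.stronglyMeasurableAtFilter hψm
  have hI0 : I 0 = 0 := intervalIntegral.integral_same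
  have hI : HasDerivAt I 1 0 :=
    (hasDerivAt_integral_self hinvm hinv.continuousAt).congr_deriv (by rw [hψ0, div_one])
  have hJ : HasDerivAt (fun A => ∫ t in (0 : ℝ)..A, γ t / ψ t) (γ 0) 0 := by
    simpa [hψ0] using hasDerivAt_integral_self (stronglyMeasurableAtFilter_div₀ hγm hψm)
      (ContinuousAt.div hγ hψ.continuousAt hψne)
  have hF := (hasDerivAt_dslope_one_sub_exp_neg_comp hI0
    (hasDerivAt_dslope_integral hinvm hinv)).mul hJ.exp
  have hderiv : deriv (fun A => 1 - Real.exp (-I A)) 0 = 1 := by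
    simpa [hI0] using (hI.fun_neg.exp.const_sub 1).deriv
  refine (hF.congr_deriv ?_).congr_of_eventuallyEq (.of_forall fun A => ?_)
  · simp only [dslope_same, hderiv, hI.deriv, intervalIntegral.integral_same, Real.exp_zero,
      smul_eq_mul]
    ring
  · obtain rfl | hA := eq_or_ne A 0
    · simp [hderiv]
    · simp [hA, dslope_of_ne, slope_def_field, I]

/-- First-order coefficient of the general noncovariant dispersion function: if `ψ, γ` are
continuous on a neighborhood of `0`, `ψ(0) = 1`, and `ψ` is differentiable at `0` with
`ψ′(0) = ψ₁`, then `F(A) = ((1 − exp(−∫₀^A dt/ψ(t)))/A)·exp(∫₀^A γ(t)/ψ(t) dt)` (with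
`F(0) = 1`) is differentiable at `0` with `F′(0) = (2γ(0) − 1 − ψ₁)/2`. -/
theorem noncovariant_dispersion_first_order (ψ γ : ℝ → ℝ) (U : Set ℝ)
    (hU : U ∈ nhds (0 : ℝ)) (hψc : ContinuousOn ψ U) (hγc : ContinuousOn γ U)
    (hψ0 : ψ 0 = 1) (ψ₁ : ℝ) (hψd : HasDerivAt ψ ψ₁ 0) :
    HasDerivAt (fun A : ℝ =>
        if A = 0 then 1 else
          ((1 - Real.exp (-(∫ t in (0 : ℝ)..A, 1 / ψ t))) / A)
            * Real.exp (∫ t in (0 : ℝ)..A, γ t / ψ t))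
      ((2 * γ 0 - 1 - ψ₁) / 2) 0 := by
  exact noncovariant_dispersion_first_order_general
    (stronglyMeasurableAtFilter_of_continuousOn_mem_nhds hψc hU)
    (stronglyMeasurableAtFilter_of_continuousOn_mem_nhds hγc hU) hψ0 hψd (hγc.continuousAt hU)
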